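/- Let B and B' be unital associative ℂ-algebras such that B' has countable dimension over ℂ. Let M' be a B'-module whose only B'-invariant subspaces are 0 and M' (a strictly simple module), and let M be any B-module. Then the tensor product M ⊗_ℂ M' is a simple module over the algebra B ⊗_ℂ B' (acting by (b ⊗ b')·(x ⊗ x') = bx ⊗ b'x') if and only if M is a simple B-module. -/

import Mathlib

open TensorProduct

/-!
Let `K` be the ground field, and `V` and `W` the two modules, with `W` simple. Being cyclic, `W` has
countable dimension, and so does the division algebra `D` of its endomorphisms, since evaluation at
a nonzero vector embeds `D` into `W`. If some `x ∈ D` were transcendental, `D` would contain `K(x)`,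
where the uncountably many elements `1 / (x - c)` are linearly independent; so `D` is algebraic over
the algebraically closed field `K`, and `D = K`. By the Jacobson density theorem every linear
endomorphism `f` of `W` agrees on any finite set with the action of some algebra element, so each
subrepresentation `N` of `V ⊗ W` is stable under `1 ⊗ f`. Rank one maps `f` extract the coordinates
of the elements of `N` along a basis of `W`, whence `N = P ⊗ W` for a subrepresentation `P` of `V`:
the lattices of subrepresentations of `V` and `V ⊗ W` are isomorphic.
-/

open Cardinal Function

section Irreducible

theorem nontrivial_subrepresentation_iff {K G V : Type*} [Semiring K] [Monoid G] [AddCommMonoid V]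
    [Module K V] (ρ : Representation K G V) : Nontrivial (Subrepresentation ρ) ↔ Nontrivial V := by
  rw [← not_iff_not, not_nontrivial_iff_subsingleton, not_nontrivial_iff_subsingleton,
    ← subsingleton_iff_bot_eq_top, ← Subrepresentation.toSubmodule_injective.eq_iff,
    ← Submodule.subsingleton_iff K, ← subsingleton_iff_bot_eq_top]
  rfl

theorem isIrreducible_iff_forall_submodule {K G V : Type*} [Field K] [Monoid G] [AddCommGroup V]
    [Module K V] (ρ : Representation K G V) :
    ρ.IsIrreducible ↔ Nontrivial V ∧
      ∀ S : Submodule K V, (∀ g, ∀ x ∈ S, ρ g x ∈ S) → S = ⊥ ∨ S = ⊤ := by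
  rw [Representation.IsIrreducible, isSimpleOrder_iff, nontrivial_subrepresentation_iff]
  refine and_congr_right fun _ ↦ ⟨fun h S hS ↦ ?_, fun h S ↦ ?_⟩
  · exact (h ⟨S, hS⟩).imp (congrArg Subrepresentation.toSubmodule)
      (congrArg Subrepresentation.toSubmodule)
  · exact (h S.toSubmodule S.apply_mem_toSubmodule).imp
      (Subrepresentation.toSubmodule_injective ·) (Subrepresentation.toSubmodule_injective ·)

end Irreducible

section SchurDixmier

open Polynomial

universe u v w

theorem lift_mk_le_lift_rank_of_transcendental {K : Type u} {D : Type v} [Field K] [DivisionRing D]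
    [Algebra K D] {x : D} (hx : Transcendental K x) :
    lift.{v} #K ≤ lift.{u} (Module.rank K D) := by
  -- `D` need not be commutative, so `IsLocalization.lift` is not available.
  let evalUnits : nonZeroDivisors K[X] →* Dˣ :=
    Units.liftRight ((aeval x : K[X] →ₐ[K] D).toMonoidHom.comp (nonZeroDivisors K[X]).subtype)
      (fun p ↦ Units.mk0 (aeval x p.1) fun hp ↦
        nonZeroDivisors.coe_ne_zero p (transcendental_iff.1 hx p hp)) fun _ ↦ rfl
  let evalFraction : FractionRing K[X] →ₐ[K] D :=
    { OreLocalization.universalHom (aeval x : K[X] →ₐ[K] D).toRingHom evalUnits fun _ ↦ rfl with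
      commutes' c := by
        rw [IsScalarTower.algebraMap_apply K K[X] (FractionRing K[X])]
        exact (OreLocalization.universalHom_commutes ..).trans (aeval_C x c) }
  have hX : Transcendental K (algebraMap K[X] (FractionRing K[X]) X) :=
    (transcendental_algebraMap_iff (IsFractionRing.injective K[X] _)).2 (transcendental_X K)
  exact (hX.linearIndependent_sub_inv.map' evalFraction.toLinearMap
    (LinearMap.ker_eq_bot.2 evalFraction.injective)).cardinal_lift_le_rank

theorem isAlgebraic_of_lift_rank_lt {K : Type u} {D : Type v} [Field K] [DivisionRing D]
    [Algebra K D] (h : lift.{u} (Module.rank K D) < lift.{v} #K) : Algebra.IsAlgebraic K D :=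
  ⟨fun _ ↦ not_not.1 fun hx ↦ h.not_ge (lift_mk_le_lift_rank_of_transcendental hx)⟩

theorem rank_end_le_rank (K : Type u) (A : Type v) (V : Type w) [Field K] [Ring A] [Algebra K A]
    [AddCommGroup V] [Module K V] [Module A V] [IsScalarTower K A V] [IsSimpleModule A V] :
    Module.rank K (Module.End A V) ≤ Module.rank K V := by
  have := IsSimpleModule.nontrivial A V
  obtain ⟨y, hy⟩ := exists_ne (0 : V)
  let evalAt : Module.End A V →ₗ[K] V := LinearMap.applyₗ' K y
  refine LinearMap.rank_le_of_injective evalAt ((injective_iff_map_eq_zero _).2 fun φ hφ ↦ ?_)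
  exact φ.injective_or_eq_zero.resolve_left fun hinj ↦ hy (hinj (hφ.trans φ.map_zero.symm))

theorem algebraMap_end_bijective_of_lift_rank_lt {K : Type u} {A : Type v} {V : Type w} [Field K]
    [IsAlgClosed K] [Ring A] [Algebra K A] [AddCommGroup V] [Module K V] [Module A V]
    [IsScalarTower K A V] [IsSimpleModule A V] (h : lift.{u} (Module.rank K V) < lift.{w} #K) :
    Bijective (algebraMap K (Module.End A V)) := by
  classical
  have := isAlgebraic_of_lift_rank_lt ((lift_le.2 (rank_end_le_rank K A V)).trans_lt h)
  exact IsAlgClosed.algebraMap_bijective_of_isIntegral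

theorem algebraMap_intertwiningMap_bijective_of_lift_rank_lt {K : Type u} {G : Type v} {V : Type w}
    [Field K] [IsAlgClosed K] [Monoid G] [AddCommGroup V] [Module K V] {σ : Representation K G V}
    [σ.IsIrreducible] (h : lift.{u} (Module.rank K V) < lift.{w} #K) :
    Bijective (algebraMap K (σ.IntertwiningMap σ)) := by
  have hEnd : Bijective (algebraMap K (Module.End (MonoidAlgebra K G) σ.asModule)) :=
    algebraMap_end_bijective_of_lift_rank_lt h
  exact (Representation.IntertwiningMap.equivAlgEnd (ρ := σ)).symm.bijective.comp hEnd

theorem lift_rank_le_lift_rank_of_isIrreducible {K : Type u} {A : Type v} {V : Type w} [Field K]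
    [Ring A] [Algebra K A] [AddCommGroup V] [Module K V] (ρ : A →ₐ[K] Module.End K V)
    [hρ : Representation.IsIrreducible (ρ : A →* Module.End K V)] :
    lift.{v} (Module.rank K V) ≤ lift.{w} (Module.rank K A) := by
  have : Nontrivial V := (nontrivial_subrepresentation_iff _).1 hρ.toNontrivial
  obtain ⟨y, hy⟩ := exists_ne (0 : V)
  let orbitMap : A →ₗ[K] V := (LinearMap.applyₗ y).comp ρ.toLinearMap
  let orbit : Subrepresentation (ρ : A →* Module.End K V) :=
    { toSubmodule := LinearMap.range orbitMap
      apply_mem_toSubmodule := by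
        rintro a _ ⟨b, rfl⟩
        exact ⟨a * b, by simp [orbitMap]⟩ }
  have horbit : orbit = ⊤ := (eq_bot_or_eq_top orbit).resolve_left fun h ↦
    hy (h.le ⟨1, by simp [orbitMap]⟩)
  exact LinearMap.lift_rank_le_of_surjective orbitMap
    (LinearMap.range_eq_top.1 (congrArg Subrepresentation.toSubmodule horbit))

theorem rank_le_aleph0_of_countable_span {R M : Type*} [Semiring R] [StrongRankCondition R]
    [AddCommMonoid M] [Module R M] {s : Set M} (hs : s.Countable) (hspan : Submodule.span R s = ⊤) :
    Module.rank R M ≤ ℵ₀ := by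
  rw [← rank_top, ← hspan]
  exact (rank_span_le s).trans hs.le_aleph0

theorem algebraMap_intertwiningMap_bijective_of_rank_le_aleph0 {K A V : Type*} [Field K]
    [IsAlgClosed K] [Uncountable K] [Ring A] [Algebra K A] [AddCommGroup V] [Module K V]
    (ρ : A →ₐ[K] Module.End K V) [Representation.IsIrreducible (ρ : A →* Module.End K V)]
    (hA : Module.rank K A ≤ ℵ₀) :
    Bijective (algebraMap K (Representation.IntertwiningMap (ρ : A →* Module.End K V)
      (ρ : A →* Module.End K V))) := by
  have hV : Module.rank K V ≤ ℵ₀ :=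
    lift_le_aleph0.1 ((lift_rank_le_lift_rank_of_isIrreducible ρ).trans (lift_le_aleph0.2 hA))
  exact algebraMap_intertwiningMap_bijective_of_lift_rank_lt
    ((lift_le_aleph0.2 hV).trans_lt (aleph0_lt_lift.2 aleph0_lt_mk))

end SchurDixmier

section Density

theorem exists_forall_mem_apply_eq_smul {K A V : Type*} [CommRing K] [Ring A] [Algebra K A]
    [AddCommGroup V] [Module K V] [Module A V] [IsScalarTower K A V] [IsSemisimpleModule A V]
    (hA : Surjective (algebraMap K (Module.End A V))) (f : Module.End K V) (s : Finset V) :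
    ∃ a : A, ∀ v ∈ s, f v = a • v :=
  jacobson_density
    { f with
      map_smul' φ v := by
        obtain ⟨c, rfl⟩ := hA φ
        simp } s

theorem exists_forall_mem_apply_eq_asAlgebraHom {K G V : Type*} [Field K] [Monoid G]
    [AddCommGroup V] [Module K V] {σ : Representation K G V} [σ.IsIrreducible]
    (hσ : Surjective (algebraMap K (σ.IntertwiningMap σ))) (f : Module.End K V) (s : Finset V) :
    ∃ a : MonoidAlgebra K G, ∀ v ∈ s, f v = σ.asAlgebraHom a v := by
  have hEnd : Surjective (algebraMap K (Module.End (MonoidAlgebra K G) σ.asModule)) :=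
    (Representation.IntertwiningMap.equivAlgEnd (ρ := σ)).surjective.comp hσ
  exact exists_forall_mem_apply_eq_smul (V := σ.asModule) hEnd f s

end Density

section ExternalTensorProduct

variable {K G H V W : Type*} [Monoid G] [Monoid H]

section CommSemiring

variable [CommSemiring K] [AddCommMonoid V] [Module K V] [AddCommMonoid W] [Module K W]

/-- The external tensor product of representations of `G` on `V` and of `H` on `W`: the
representation of `G × H` on `V ⊗ W` in which `(g, h)` acts as `ρ g ⊗ σ h`. -/
noncomputable def externalTprod (ρ : Representation K G V) (σ : Representation K H W) :
    Representation K (G × H) (V ⊗[K] W) :=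
  Representation.tprod (MonoidHom.comp ρ (MonoidHom.fst G H)) (MonoidHom.comp σ (MonoidHom.snd G H))

theorem externalTprod_apply (ρ : Representation K G V) (σ : Representation K H W) (g : G) (h : H) :
    externalTprod ρ σ (g, h) = TensorProduct.map (ρ g) (σ h) :=
  rfl

namespace externalTprod

variable {ρ : Representation K G V} {σ : Representation K H W}

theorem lTensor_asAlgebraHom_mem (N : Subrepresentation (externalTprod ρ σ))
    (a : MonoidAlgebra K H) {t : V ⊗[K] W} (ht : t ∈ N) :
    (σ.asAlgebraHom a).lTensor V t ∈ N := by
  change _ ∈ N.toSubmodule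
  induction a using MonoidAlgebra.induction_linear with
  | zero => simp
  | add a b ha hb =>
    rw [map_add, LinearMap.lTensor_add]
    exact N.toSubmodule.add_mem ha hb
  | single h c =>
    rw [Representation.asAlgebraHom_single, LinearMap.lTensor_smul]
    have hmem := N.apply_mem_toSubmodule (1, h) ht
    rw [externalTprod_apply, map_one] at hmem
    exact N.toSubmodule.smul_mem c hmem

/-- The subrepresentation `P ⊗ W` of `V ⊗ W` spanned by the pure tensors with left factor in `P`. -/
noncomputable def tensorRight (σ : Representation K H W) (P : Subrepresentation ρ) :
    Subrepresentation (externalTprod ρ σ) where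
  toSubmodule := Submodule.map₂ (TensorProduct.mk K V W) P.toSubmodule ⊤
  apply_mem_toSubmodule := fun (g, h) ↦ by
    have hle : Submodule.map₂ (TensorProduct.mk K V W) P.toSubmodule ⊤ ≤
        (Submodule.map₂ (TensorProduct.mk K V W) P.toSubmodule ⊤).comap
          (TensorProduct.map (ρ g) (σ h)) :=
      Submodule.map₂_le.2 fun v hv w _ ↦
        Submodule.apply_mem_map₂ _ (P.apply_mem_toSubmodule g hv) (Submodule.mem_top (x := σ h w))
    exact hle

/-- The subrepresentation of `V` consisting of the `v` with `v ⊗ w ∈ N` for all `w`; it is the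
largest `P` with `P ⊗ W ≤ N`. -/
def leftFactor (N : Subrepresentation (externalTprod ρ σ)) : Subrepresentation ρ where
  toSubmodule := ⨅ w : W, N.toSubmodule.comap ((TensorProduct.mk K V W).flip w)
  apply_mem_toSubmodule g v hv := by
    simp only [Submodule.mem_iInf] at hv ⊢
    intro w
    simpa [externalTprod_apply] using N.apply_mem_toSubmodule (g, 1) (hv w)

theorem mem_leftFactor {N : Subrepresentation (externalTprod ρ σ)} {v : V} :
    v ∈ leftFactor N ↔ ∀ w, v ⊗ₜ[K] w ∈ N :=
  Submodule.mem_iInf _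

theorem tensorRight_le_iff {P : Subrepresentation ρ} {N : Subrepresentation (externalTprod ρ σ)} :
    tensorRight σ P ≤ N ↔ P ≤ leftFactor N :=
  Submodule.map₂_le.trans <| forall₂_congr fun _ _ ↦
    ⟨fun h ↦ mem_leftFactor.2 fun w ↦ h w Submodule.mem_top, fun h w _ ↦ mem_leftFactor.1 h w⟩

end externalTprod

end CommSemiring

section Field

variable [Field K] [AddCommGroup V] [Module K V] [AddCommGroup W] [Module K W]

namespace externalTprod

variable {ρ : Representation K G V} {σ : Representation K H W}

theorem leftFactor_tensorRight [Nontrivial W] (P : Subrepresentation ρ) :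
    leftFactor (tensorRight σ P) = P := by
  refine le_antisymm (fun v hv ↦ ?_) (tensorRight_le_iff.1 le_rfl)
  obtain ⟨w, hw⟩ := exists_ne (0 : W)
  obtain ⟨φ, hφ⟩ := Module.Projective.exists_dual_eq_one K hw
  let contract : V ⊗[K] W →ₗ[K] V := TensorProduct.rid K V ∘ₗ φ.lTensor V
  have hcontract : (tensorRight σ P).toSubmodule ≤ P.toSubmodule.comap contract :=
    Submodule.map₂_le.2 fun v hv w _ ↦ by
      simpa [contract] using P.toSubmodule.smul_mem (φ w) hv
  change v ∈ P.toSubmodule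
  simpa [contract, hφ] using hcontract (mem_leftFactor.1 hv w)

theorem lTensor_mem [σ.IsIrreducible] (hσ : Surjective (algebraMap K (σ.IntertwiningMap σ)))
    (N : Subrepresentation (externalTprod ρ σ)) (f : Module.End K W) {t : V ⊗[K] W} (ht : t ∈ N) :
    f.lTensor V t ∈ N := by
  classical
  obtain ⟨S, rfl⟩ := TensorProduct.exists_finset t
  obtain ⟨a, ha⟩ := exists_forall_mem_apply_eq_asAlgebraHom hσ f (S.image Prod.snd)
  have hfa : f.lTensor V (∑ p ∈ S, p.1 ⊗ₜ[K] p.2) =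
      (σ.asAlgebraHom a).lTensor V (∑ p ∈ S, p.1 ⊗ₜ[K] p.2) := by
    simp only [map_sum, LinearMap.lTensor_tmul]
    exact Finset.sum_congr rfl fun p hp ↦ by rw [ha _ (Finset.mem_image_of_mem _ hp)]
  rw [hfa]
  exact lTensor_asAlgebraHom_mem N a ht

theorem tensorRight_leftFactor [σ.IsIrreducible]
    (hσ : Surjective (algebraMap K (σ.IntertwiningMap σ)))
    (N : Subrepresentation (externalTprod ρ σ)) :
    tensorRight σ (leftFactor N) = N := by
  classical
  refine le_antisymm (tensorRight_le_iff.2 le_rfl) fun t ht ↦ ?_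
  let b := Module.Basis.ofVectorSpace K W
  obtain ⟨v, rfl⟩ := TensorProduct.eq_repr_basis_right b t
  have hcoord (i) (w : W) : ((b.coord i).smulRight w).lTensor V (v.sum fun j m ↦ m ⊗ₜ[K] b j) =
      v i ⊗ₜ[K] w := by
    simp +contextual [Finsupp.sum, Finsupp.single_apply, TensorProduct.tmul_ite]
  have hv (i) : v i ∈ leftFactor N :=
    mem_leftFactor.2 fun w ↦ hcoord i w ▸ lTensor_mem hσ N ((b.coord i).smulRight w) ht
  exact Submodule.sum_mem _ fun i _ ↦
    Submodule.apply_mem_map₂ _ (hv i) (Submodule.mem_top (x := b i))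

/-- If `σ` is irreducible with only scalar endomorphisms, `P ↦ P ⊗ W` identifies the lattice of
subrepresentations of `ρ` with that of the external tensor product of `ρ` and `σ`. -/
noncomputable def subrepresentationOrderIso [σ.IsIrreducible]
    (hσ : Surjective (algebraMap K (σ.IntertwiningMap σ))) :
    Subrepresentation ρ ≃o Subrepresentation (externalTprod ρ σ) :=
  have : Nontrivial W := (nontrivial_subrepresentation_iff σ).1 inferInstance
  { toFun := tensorRight σ
    invFun := leftFactor
    left_inv := leftFactor_tensorRight
    right_inv := tensorRight_leftFactor hσ
    map_rel_iff' {P Q} := by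
      change tensorRight σ P ≤ tensorRight σ Q ↔ P ≤ Q
      rw [tensorRight_le_iff, leftFactor_tensorRight] }

end externalTprod

end Field

end ExternalTensorProduct

instance uncountable_complex : Uncountable ℂ :=
  Complex.ofReal_injective.uncountable

theorem tensor_with_strictly_simple_module_simple_iff_general {K G H V W : Type*} [Field K]
    [Monoid G] [Monoid H] [AddCommGroup V] [Module K V] [AddCommGroup W] [Module K W]
    {ρ : Representation K G V} {σ : Representation K H W} [σ.IsIrreducible]
    (hσ : Surjective (algebraMap K (σ.IntertwiningMap σ))) :
    (externalTprod ρ σ).IsIrreducible ↔ ρ.IsIrreducible :=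
  (externalTprod.subrepresentationOrderIso hσ).isSimpleOrder_iff.symm

/-- Let `B, B'` be unital associative ℂ-algebras with `B'` of countable
dimension, `M'` a strictly simple `B'`-module, and `M` any `B`-module (actions given by
algebra maps into endomorphism algebras). Then `M ⊗ M'` is a simple `B ⊗ B'`-module
(with `(b ⊗ b')·(x ⊗ x') = bx ⊗ b'x'`) if and only if `M` is a simple `B`-module. -/
theorem tensor_with_strictly_simple_module_simple_iff
    (B B' : Type*) [Ring B] [Algebra ℂ B] [Ring B'] [Algebra ℂ B']
    (hcount : ∃ s : Set B', s.Countable ∧ Submodule.span ℂ s = ⊤)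
    (M M' : Type*) [AddCommGroup M] [Module ℂ M] [AddCommGroup M'] [Module ℂ M']
    (ρ : B →ₐ[ℂ] Module.End ℂ M) (ρ' : B' →ₐ[ℂ] Module.End ℂ M')
    (hM'nontriv : Nontrivial M')
    (hM'strict : ∀ S : Submodule ℂ M',
      (∀ (b' : B'), ∀ x ∈ S, ρ' b' x ∈ S) → S = ⊥ ∨ S = ⊤) :
    (Nontrivial (M ⊗[ℂ] M') ∧
      ∀ N : Submodule ℂ (M ⊗[ℂ] M'),
        (∀ (b : B) (b' : B'), ∀ x ∈ N, TensorProduct.map (ρ b) (ρ' b') x ∈ N) →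
        N = ⊥ ∨ N = ⊤) ↔
    (Nontrivial M ∧
      ∀ P : Submodule ℂ M, (∀ (b : B), ∀ x ∈ P, ρ b x ∈ P) → P = ⊥ ∨ P = ⊤) := by
  have : Representation.IsIrreducible (ρ' : B' →* Module.End ℂ M') :=
    (isIrreducible_iff_forall_submodule _).2 ⟨hM'nontriv, hM'strict⟩
  obtain ⟨s, hs, hspan⟩ := hcount
  have hscalar := algebraMap_intertwiningMap_bijective_of_rank_le_aleph0 ρ'
    (rank_le_aleph0_of_countable_span hs hspan)
  simpa only [isIrreducible_iff_forall_submodule, Prod.forall, externalTprod_apply,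
    MonoidHom.coe_coe] using tensor_with_strictly_simple_module_simple_iff_general
      (ρ := (ρ : B →* Module.End ℂ M)) hscalar.surjective
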